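/- (Bernstein's theorem) Let u : ℝ² → ℝ be a smooth function solving the minimal surface equation on all of ℝ². Then u is affine, i.e. there exist b ∈ ℝ² and c ∈ ℝ with u(x) = ⟨b, x⟩ + c for all x ∈ ℝ². -/

import Mathlib

open Real

/-- First partial derivative of `u` at `x` in direction `i`. -/
noncomputable def partialDeriv' {n : ℕ} (u : EuclideanSpace ℝ (Fin n) → ℝ) (i : Fin n)
    (x : EuclideanSpace ℝ (Fin n)) : ℝ :=
  fderiv ℝ u x (EuclideanSpace.single i 1)

/-- Second partial derivative matrix (Hessian) of `u` at `x`. -/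
noncomputable def hessianMatrix {n : ℕ} (u : EuclideanSpace ℝ (Fin n) → ℝ)
    (x : EuclideanSpace ℝ (Fin n)) : Matrix (Fin n) (Fin n) ℝ :=
  Matrix.of fun i j =>
    fderiv ℝ (fun y => fderiv ℝ u y (EuclideanSpace.single j 1)) x (EuclideanSpace.single i 1)

/-!
Write `p = ∇u` and `W = √(1 + |p|²)`. The minimal surface equation says that the matrix field
`(1 + p ⊗ p) / W`, which is symmetric, positive and of determinant `1`, is the derivative of a map
`G` of the plane (`G` is the gradient of a convex solution of `det D²f = 1`). As `G` is monotone,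
`1 + G` is an expanding bijection of `ℂ`, and the determinant condition makes the complex conjugate
of the `1`-Lipschitz map `(1 - G) ∘ (1 + G)⁻¹` holomorphic. By Liouville's theorem its derivative is
constant; hence so are the derivative of `G` and, by connectedness, `p`.
-/

open scoped InnerProductSpace Topology ComplexConjugate

section NormedSpace

variable {E F H : Type*} [NormedAddCommGroup E] [NormedSpace ℝ E] [NormedAddCommGroup F]
  [NormedSpace ℝ F] [NormedAddCommGroup H] [NormedSpace ℝ H] {K : NNReal} {f : E → F}

theorem norm_le_mul_norm_of_hasFDerivAt_of_antilipschitzWith (hf : AntilipschitzWith K f)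
    {f' : E →L[ℝ] F} {x : E} (hf' : HasFDerivAt f f' x) (v : E) : ‖v‖ ≤ K * ‖f' v‖ := by
  have hlim : Filter.Tendsto (fun t : ℝ => K * ‖t⁻¹ • (f (x + t • v) - f x)‖) (𝓝[≠] 0)
      (𝓝 (K * ‖f' v‖)) :=
    ((hf'.hasLineDerivAt v).tendsto_slope_zero.norm).const_mul _
  refine ge_of_tendsto hlim (eventually_mem_nhdsWithin.mono fun t (ht : t ≠ 0) => ?_)
  have hdist : |t| * ‖v‖ ≤ K * ‖f (x + t • v) - f x‖ := by
    simpa [dist_eq_norm, norm_smul] using hf.le_mul_dist (x + t • v) x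
  rw [norm_smul, norm_inv, Real.norm_eq_abs, mul_left_comm, ← div_eq_inv_mul,
    le_div_iff₀ (abs_pos.2 ht), mul_comm]
  exact hdist

theorem surjective_of_contDiff_of_antilipschitzWith [FiniteDimensional ℝ E]
    [FiniteDimensional ℝ F] (hdim : Module.finrank ℝ E = Module.finrank ℝ F)
    (hf : ContDiff ℝ 1 f) (hK : AntilipschitzWith K f) : Function.Surjective f := by
  have hinj (x : E) : Function.Injective (fderiv ℝ f x).toLinearMap := by
    refine (injective_iff_map_eq_zero _).2 fun v hv => norm_le_zero_iff.1 ?_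
    simpa [show fderiv ℝ f x v = 0 from hv] using
      norm_le_mul_norm_of_hasFDerivAt_of_antilipschitzWith hK
        (hf.differentiable one_ne_zero x).hasFDerivAt v
  have hopen : IsOpenMap f := by
    refine isOpenMap_of_hasStrictFDerivAt_equiv (f' := fun x =>
      (LinearMap.linearEquivOfInjective _ (hinj x) hdim).toContinuousLinearEquiv) fun x => ?_
    exact hf.contDiffAt.hasStrictFDerivAt one_ne_zero
  have hproper : IsProperMap f := by
    refine isProperMap_iff_tendsto_cocompact.2 ⟨hf.continuous, ?_⟩
    rw [← Metric.cobounded_eq_cocompact, ← Metric.cobounded_eq_cocompact]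
    exact hK.tendsto_cobounded
  exact Set.range_eq_univ.1 <| IsClopen.eq_univ
    ⟨hproper.isClosedMap.isClosed_range, hopen.isOpen_range⟩ (Set.range_nonempty f)

theorem hasFDerivAt_of_hasFDerivAt_comp_of_antilipschitzWith (hK : AntilipschitzWith K f)
    (hsurj : Function.Surjective f) {g : F → H} {f' : E →L[ℝ] F} {g' : F →L[ℝ] H} {x : E}
    (hf : HasFDerivAt f f' x) (hgf : HasFDerivAt (g ∘ f) (g' ∘L f') x) :
    HasFDerivAt g g' (f x) := by
  have hright := Function.rightInverse_surjInv hsurj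
  have hleft : Function.surjInv hsurj (f x) = x := hK.injective (hright _)
  have hcont : Filter.Tendsto (Function.surjInv hsurj) (𝓝 (f x)) (𝓝 x) := by
    simpa only [hleft] using (hK.to_rightInverse hright).continuous.tendsto (f x)
  have hsub : (fun y => y - x) =O[𝓝 x] fun y => f y - f x :=
    .of_bound K (.of_forall fun y => by simpa [dist_eq_norm] using hK.le_mul_dist y x)
  have hlittle : (fun y => g (f y) - g (f x) - g' (f y - f x)) =o[𝓝 x] fun y => f y - f x := by
    have hg := hgf.isLittleO.sub ((g'.isBigO_comp _ _).trans_isLittleO hf.isLittleO)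
    refine (hg.congr_left fun y => ?_).trans_isBigO hsub
    simp [map_sub]
  refine .of_isLittleO ((hlittle.comp_tendsto hcont).congr (fun w => ?_) fun w => ?_) <;>
    simp [Function.comp_apply, hright w]

end NormedSpace

section MonotoneMap

variable {E : Type*} [NormedAddCommGroup E] [InnerProductSpace ℝ E] {G : E → E}

theorem norm_le_norm_add_of_inner_nonneg {x y : E} (h : 0 ≤ ⟪x, y⟫_ℝ) : ‖x‖ ≤ ‖x + y‖ := by
  refine le_of_sq_le_sq ?_ (norm_nonneg _)
  rw [norm_add_sq_real]
  linarith [sq_nonneg ‖y‖]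

theorem norm_sub_le_norm_add_of_inner_nonneg {x y : E} (h : 0 ≤ ⟪x, y⟫_ℝ) :
    ‖x - y‖ ≤ ‖x + y‖ := by
  refine le_of_sq_le_sq ?_ (norm_nonneg _)
  rw [norm_add_sq_real, norm_sub_sq_real]
  linarith

/-- Monotonicity of a (single-valued, everywhere defined) operator in the sense of Minty; gradients
of convex functions are the basic example. -/
def IsMonotoneMap (G : E → E) : Prop :=
  ∀ x y, 0 ≤ ⟪x - y, G x - G y⟫_ℝ

theorem isMonotoneMap_of_hasFDerivAt {G' : E → E →L[ℝ] E} (hG : ∀ x, HasFDerivAt G (G' x) x)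
    (hG' : ∀ x v, 0 ≤ ⟪v, G' x v⟫_ℝ) : IsMonotoneMap G := by
  intro x y
  have hderiv (t : ℝ) : HasDerivAt (fun t : ℝ => ⟪x - y, G (AffineMap.lineMap y x t)⟫_ℝ)
      ⟪x - y, G' (AffineMap.lineMap y x t) (x - y)⟫_ℝ t :=
    ((innerSL ℝ (x - y)).hasFDerivAt.comp_hasDerivAt t
      ((hG _).comp_hasDerivAt t AffineMap.hasDerivAt_lineMap))
  have hmono := monotone_of_deriv_nonneg (fun t => (hderiv t).differentiableAt)
    (fun t => (hderiv t).deriv ▸ hG' _ _)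
  simpa [inner_sub_right] using hmono zero_le_one

/-- The Cayley transform `(1 - G) ∘ (1 + G)⁻¹` of a map. The inverse is `Function.invFun`, so the
definition is meaningful once `1 + G` is bijective. -/
noncomputable def cayleyTransform (G : E → E) : E → E :=
  (fun x => x - G x) ∘ Function.invFun fun x => x + G x

namespace IsMonotoneMap

theorem antilipschitzWith_self_add (hG : IsMonotoneMap G) :
    AntilipschitzWith 1 fun x => x + G x := by
  refine .of_le_mul_dist fun x y => ?_
  simpa [dist_eq_norm, add_sub_add_comm] using norm_le_norm_add_of_inner_nonneg (hG x y)

theorem surjective_self_add [FiniteDimensional ℝ E] (hG : IsMonotoneMap G)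
    (hG' : ContDiff ℝ 1 G) : Function.Surjective fun x => x + G x :=
  surjective_of_contDiff_of_antilipschitzWith rfl (contDiff_id.add hG')
    hG.antilipschitzWith_self_add

theorem cayleyTransform_self_add (hG : IsMonotoneMap G) (x : E) :
    cayleyTransform G (x + G x) = x - G x := by
  have hinv := Function.leftInverse_invFun hG.antilipschitzWith_self_add.injective x
  exact congrArg (fun y => y - G y) hinv

theorem lipschitzWith_cayleyTransform (hG : IsMonotoneMap G)
    (hsurj : Function.Surjective fun x => x + G x) : LipschitzWith 1 (cayleyTransform G) := by
  refine .of_dist_le_mul (hsurj.forall₂.2 fun x y => ?_)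
  simpa [hG.cayleyTransform_self_add, dist_eq_norm, add_sub_add_comm, sub_sub_sub_comm] using
    norm_sub_le_norm_add_of_inner_nonneg (hG x y)

theorem hasFDerivAt_cayleyTransform (hG : IsMonotoneMap G)
    (hsurj : Function.Surjective fun x => x + G x) {G' D : E →L[ℝ] E} {x : E}
    (hG' : HasFDerivAt G G' x) (hD : ∀ v, D (v + G' v) = v - G' v) :
    HasFDerivAt (cayleyTransform G) D (x + G x) := by
  refine hasFDerivAt_of_hasFDerivAt_comp_of_antilipschitzWith hG.antilipschitzWith_self_add hsurj
    ((hasFDerivAt_id x).add hG') ?_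
  have hcomp : cayleyTransform G ∘ (fun x => x + G x) = fun x => x - G x :=
    funext hG.cayleyTransform_self_add
  rw [hcomp]
  exact ((hasFDerivAt_id x).sub hG').congr_fderiv (ContinuousLinearMap.ext fun v => (hD v).symm)

end IsMonotoneMap

end MonotoneMap

theorem deriv_eq_deriv_of_lipschitzWith {F : Type*} [NormedAddCommGroup F] [NormedSpace ℂ F]
    [CompleteSpace F] {K : NNReal} {f : ℂ → F} (hf : Differentiable ℂ f) (hK : LipschitzWith K f)
    (z w : ℂ) : deriv f z = deriv f w := by
  refine hf.deriv.apply_eq_apply_of_bounded (isBounded_iff_forall_norm_le.2 ⟨K, ?_⟩) z w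
  rintro _ ⟨x, rfl⟩
  exact norm_deriv_le_of_lipschitz hK

/-- The symmetric real `2 × 2` matrix of trace `2a` and determinant `a² - |b|²`, written as the
real-linear map `v ↦ a v + b v̄` of `ℂ`; every symmetric real `2 × 2` matrix is of this form. -/
noncomputable def symmCLM (a : ℝ) (b : ℂ) : ℂ →L[ℝ] ℂ :=
  a • ContinuousLinearMap.id ℝ ℂ + b • (Complex.conjCLE : ℂ →L[ℝ] ℂ)

theorem symmCLM_apply (a : ℝ) (b v : ℂ) : symmCLM a b v = a * v + b * conj v := by
  simp [symmCLM]

theorem inner_symmCLM_nonneg {a : ℝ} {b : ℂ} (h : ‖b‖ ≤ a) (v : ℂ) :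
    0 ≤ ⟪v, symmCLM a b v⟫_ℝ := by
  have hinner : ⟪v, symmCLM a b v⟫_ℝ = a * ‖v‖ ^ 2 + (b * conj v ^ 2).re := by
    rw [Complex.inner, symmCLM_apply, Complex.sq_norm, Complex.normSq_apply]
    simp only [pow_two, Complex.add_re, Complex.mul_re, Complex.add_im, Complex.mul_im,
      Complex.ofReal_re, Complex.ofReal_im, Complex.conj_re, Complex.conj_im]
    ring
  have hre : -(‖b‖ * ‖v‖ ^ 2) ≤ (b * conj v ^ 2).re := by
    have := (abs_le.1 (Complex.abs_re_le_norm (b * conj v ^ 2))).1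
    rwa [norm_mul, norm_pow, Complex.norm_conj] at this
  rw [hinner]
  nlinarith [sq_nonneg ‖v‖]

theorem conj_sub_symmCLM {a : ℝ} {b : ℂ} (ha : 0 < a) (hdet : a ^ 2 - ‖b‖ ^ 2 = 1) (v : ℂ) :
    conj (v - symmCLM a b v) = -conj b / (1 + a) * (v + symmCLM a b v) := by
  have hne : (1 + a : ℂ) ≠ 0 := by exact_mod_cast (by positivity : 1 + a ≠ 0)
  have hdet' : (a : ℂ) ^ 2 - conj b * b = 1 := by
    rw [Complex.conj_mul']
    exact_mod_cast hdet
  rw [symmCLM_apply, div_mul_eq_mul_div, eq_div_iff hne]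
  simp only [map_sub, map_add, map_mul, Complex.conj_ofReal, Complex.conj_conj]
  linear_combination -conj v * hdet'

theorem eq_of_div_one_add_eq {a a' : ℝ} {b b' : ℂ} (ha : 0 < a) (ha' : 0 < a')
    (hdet : a ^ 2 - ‖b‖ ^ 2 = 1) (hdet' : a' ^ 2 - ‖b'‖ ^ 2 = 1)
    (h : b / (1 + a) = b' / (1 + a')) : a = a' ∧ b = b' := by
  have hnorm {x : ℝ} {y : ℂ} (hx : 0 < x) (hxy : x ^ 2 - ‖y‖ ^ 2 = 1) :
      ‖y / (1 + x)‖ ^ 2 = 1 - 2 / (1 + x) := by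
    have hnorm_add : ‖(1 + x : ℂ)‖ = 1 + x := by
      exact_mod_cast Complex.norm_of_nonneg (by positivity : 0 ≤ 1 + x)
    rw [norm_div, hnorm_add]
    field_simp
    linear_combination -hxy
  have haa' : a = a' := by
    have := hnorm ha hdet
    rw [h, hnorm ha' hdet'] at this
    field_simp at this
    linarith
  subst haa'
  have hne : (1 + a : ℂ) ≠ 0 := by exact_mod_cast (by positivity : 1 + a ≠ 0)
  exact ⟨rfl, (div_left_inj' hne).1 h⟩

section Jorgens

variable {a : ℂ → ℝ} {b G : ℂ → ℂ}

theorem isMonotoneMap_of_hasFDerivAt_symmCLM (hpos : ∀ z, 0 < a z)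
    (hdet : ∀ z, a z ^ 2 - ‖b z‖ ^ 2 = 1) (hG : ∀ z, HasFDerivAt G (symmCLM (a z) (b z)) z) :
    IsMonotoneMap G :=
  isMonotoneMap_of_hasFDerivAt hG fun z =>
    inner_symmCLM_nonneg (le_of_sq_le_sq (by linarith [hdet z]) (hpos z).le)

-- This holomorphic map is Lewy's transformation of the convex potential of `G`.
theorem hasDerivAt_conj_cayleyTransform (hpos : ∀ z, 0 < a z)
    (hdet : ∀ z, a z ^ 2 - ‖b z‖ ^ 2 = 1) (hG : ∀ z, HasFDerivAt G (symmCLM (a z) (b z)) z)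
    (hsurj : Function.Surjective fun z => z + G z) (z : ℂ) :
    HasDerivAt (fun w => conj (cayleyTransform G w)) (-conj (b z) / (1 + a z)) (z + G z) := by
  set c := -conj (b z) / (1 + a z)
  let D : ℂ →L[ℝ] ℂ := Complex.conjCLE ∘L ContinuousLinearMap.mul ℝ ℂ c
  have hcayley : HasFDerivAt (cayleyTransform G) D (z + G z) := by
    refine (isMonotoneMap_of_hasFDerivAt_symmCLM hpos hdet hG).hasFDerivAt_cayleyTransform
      hsurj (hG z) fun v => ?_
    simp [D, c, ← conj_sub_symmCLM (hpos z) (hdet z)]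
  refine hasDerivAt_iff_hasFDerivAt.2 <| hasFDerivAt_of_restrictScalars ℝ
    ((Complex.conjCLE : ℂ →L[ℝ] ℂ).hasFDerivAt.comp _ hcayley) ?_
  ext v
  simp [D, mul_comm]

/-- Jörgens' theorem: `G` plays the role of `∇f` for an entire convex solution of `det D²f = 1`. -/
theorem symmCLM_coeff_eq_of_det_eq_one (hpos : ∀ z, 0 < a z)
    (hdet : ∀ z, a z ^ 2 - ‖b z‖ ^ 2 = 1) (hG : ∀ z, HasFDerivAt G (symmCLM (a z) (b z)) z)
    (ha : Continuous a) (hb : Continuous b) (z w : ℂ) :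
    a z = a w ∧ b z = b w := by
  have hmono := isMonotoneMap_of_hasFDerivAt_symmCLM hpos hdet hG
  have hcont : ContDiff ℝ 1 G := by
    refine contDiff_one_iff_hasFDerivAt.2 ⟨_, ?_, hG⟩
    unfold symmCLM
    fun_prop
  have hsurj := hmono.surjective_self_add hcont
  have hderiv := hasDerivAt_conj_cayleyTransform hpos hdet hG hsurj
  have hdiff : Differentiable ℂ fun w => conj (cayleyTransform G w) :=
    hsurj.forall.2 fun z => (hderiv z).differentiableAt
  have hlip : LipschitzWith 1 fun w => conj (cayleyTransform G w) := by
    simpa [Function.comp_def] using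
      Complex.isometry_conj.lipschitz.comp (hmono.lipschitzWith_cayleyTransform hsurj)
  have heq := deriv_eq_deriv_of_lipschitzWith hdiff hlip (z + G z) (w + G w)
  rw [(hderiv z).deriv, (hderiv w).deriv] at heq
  refine eq_of_div_one_add_eq (hpos z) (hpos w) (hdet z) (hdet w) ?_
  simpa [neg_div] using congrArg conj heq

end Jorgens

section AreaDensity

variable {E : Type*} [NormedAddCommGroup E]

/-- The area density `√(1 + |p|²)` of a graph whose gradient is `p`. -/
noncomputable def areaDensity (p : E) : ℝ :=
  √(1 + ‖p‖ ^ 2)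

theorem areaDensity_sq (p : E) : areaDensity p ^ 2 = 1 + ‖p‖ ^ 2 :=
  Real.sq_sqrt (by positivity)

theorem one_le_areaDensity (p : E) : 1 ≤ areaDensity p :=
  Real.one_le_sqrt.2 (by linarith [sq_nonneg ‖p‖])

theorem areaDensity_pos (p : E) : 0 < areaDensity p :=
  one_pos.trans_le (one_le_areaDensity p)

theorem continuous_areaDensity : Continuous (areaDensity : E → ℝ) := by
  unfold areaDensity
  fun_prop

theorem hasFDerivAt_inv_areaDensity [InnerProductSpace ℝ E] (p : E) :
    HasFDerivAt (fun q => (areaDensity q)⁻¹) (-(areaDensity p)⁻¹ ^ 3 • innerSL ℝ p) p := by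
  have hsq : HasFDerivAt (fun q : E => 1 + ‖q‖ ^ 2) (2 • innerSL ℝ p) p :=
    (hasStrictFDerivAt_norm_sq p).hasFDerivAt.const_add 1
  have hsqrt := hsq.sqrt (by positivity)
  refine ((hasDerivAt_inv (areaDensity_pos p).ne').comp_hasFDerivAt p hsqrt).congr_fderiv ?_
  ext v
  simp only [areaDensity, smul_apply, innerSL_apply_apply, smul_eq_mul]
  field_simp
  ring

end AreaDensity

section UnimodularMetric

/-- The metric `1 + p ⊗ p` induced on a graph with gradient `p`, divided by the area density so that
its determinant is `1`. -/
noncomputable def unimodularMetric (p : ℂ) : ℂ →L[ℝ] ℂ :=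
  (areaDensity p)⁻¹ • symmCLM (1 + ‖p‖ ^ 2 / 2) (p ^ 2 / 2)

theorem unimodularMetric_eq_symmCLM (p : ℂ) : unimodularMetric p =
    symmCLM ((1 + ‖p‖ ^ 2 / 2) / areaDensity p) (p ^ 2 / 2 / areaDensity p) := by
  ext v
  simp only [unimodularMetric, smul_apply, symmCLM_apply, Complex.real_smul]
  push_cast
  ring

theorem unimodularMetric_det (p : ℂ) :
    ((1 + ‖p‖ ^ 2 / 2) / areaDensity p) ^ 2 - ‖p ^ 2 / 2 / areaDensity p‖ ^ 2 = 1 := by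
  have hW := (areaDensity_pos p).ne'
  rw [norm_div, norm_div, Complex.norm_of_nonneg (areaDensity_pos p).le, norm_pow, Complex.norm_two]
  field_simp
  rw [areaDensity_sq]
  ring

theorem sq_eq_sq_of_unimodularMetric_coeff_eq {p q : ℂ}
    (ha : (1 + ‖p‖ ^ 2 / 2) / areaDensity p = (1 + ‖q‖ ^ 2 / 2) / areaDensity q)
    (hb : p ^ 2 / 2 / areaDensity p = q ^ 2 / 2 / areaDensity q) : p ^ 2 = q ^ 2 := by
  have hp := areaDensity_pos p
  have hq := areaDensity_pos q
  have hprod : (areaDensity p - areaDensity q) * (areaDensity p * areaDensity q - 1) = 0 := by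
    rw [div_eq_div_iff hp.ne' hq.ne'] at ha
    linear_combination 2 * ha + areaDensity q * areaDensity_sq p - areaDensity p * areaDensity_sq q
  have hW : areaDensity p = areaDensity q := by
    rcases mul_eq_zero.1 hprod with h | h
    · linarith
    · nlinarith [one_le_areaDensity p, one_le_areaDensity q]
  rw [hW] at hb
  have hne : (areaDensity q : ℂ) ≠ 0 := by exact_mod_cast hq.ne'
  field_simp at hb
  exact hb

theorem hasFDerivAt_symmCLM_norm_sq_apply (p w : ℂ) :
    HasFDerivAt (fun q : ℂ => symmCLM (1 + ‖q‖ ^ 2 / 2) (q ^ 2 / 2) w)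
      ((innerSL ℝ p).smulRight w + ContinuousLinearMap.mul ℝ ℂ (p * conj w)) p := by
  have hnorm : HasFDerivAt (fun q : ℂ => 1 + ‖q‖ ^ 2 / 2) (innerSL ℝ p) p := by
    have hhalf := ((hasStrictFDerivAt_norm_sq p).hasFDerivAt.const_mul (2⁻¹ : ℝ)).const_add 1
    simpa [div_eq_inv_mul, smul_smul, ← Nat.cast_smul_eq_nsmul ℝ] using hhalf
  have hsq : HasFDerivAt (fun q : ℂ => q ^ 2 / 2 * conj w)
      (ContinuousLinearMap.mul ℝ ℂ (p * conj w)) p := by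
    refine ((((hasDerivAt_pow 2 p).div_const 2).mul_const (conj w)).hasFDerivAt.restrictScalars
      ℝ).congr_fderiv ?_
    ext v
    simp [mul_comm]
  simpa [symmCLM_apply, Pi.add_def] using (hnorm.smul_const w).add hsq

theorem differentiable_unimodularMetric : Differentiable ℝ unimodularMetric := by
  have hW : Differentiable ℝ fun q : ℂ => (areaDensity q)⁻¹ :=
    fun q => (hasFDerivAt_inv_areaDensity q).differentiableAt
  have hnorm : Differentiable ℝ fun q : ℂ => ‖q‖ ^ 2 :=
    fun q => (hasStrictFDerivAt_norm_sq q).differentiableAt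
  unfold unimodularMetric symmCLM
  fun_prop

theorem fderiv_unimodularMetric_apply (p v w : ℂ) :
    fderiv ℝ unimodularMetric p v w =
      (areaDensity p : ℂ)⁻¹ ^ 3 * ((1 + ‖p‖ ^ 2) * p * v * conj w
        + ⟪p, v⟫_ℝ * (‖p‖ ^ 2 * w - p ^ 2 * conj w) / 2) := by
  have hW : (areaDensity p : ℂ) ≠ 0 := by exact_mod_cast (areaDensity_pos p).ne'
  have hsq : (areaDensity p : ℂ) ^ 2 = 1 + ‖p‖ ^ 2 := by exact_mod_cast areaDensity_sq p
  have heval := (differentiable_unimodularMetric p).hasFDerivAt.clm_apply (hasFDerivAt_const w p)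
  have hprod := (hasFDerivAt_inv_areaDensity p).smul (hasFDerivAt_symmCLM_norm_sq_apply p w)
  have heq := DFunLike.congr_fun (heval.unique hprod) v
  simp only [ContinuousLinearMap.comp_zero, zero_add, ContinuousLinearMap.flip_apply, smul_add,
    inv_pow, neg_smul, symmCLM_apply, Complex.ofReal_add, Complex.ofReal_one, Complex.ofReal_div,
    Complex.ofReal_pow, Complex.ofReal_ofNat, add_apply, smul_apply,
    ContinuousLinearMap.smulRight_apply, coe_innerSL_apply, Complex.real_smul, Complex.ofReal_inv,
    ContinuousLinearMap.mul_apply', neg_apply, smul_eq_mul, Complex.ofReal_mul] at heq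
  rw [heq]
  field_simp
  rw [hsq]
  ring

end UnimodularMetric

section MinimalSurface

theorem ofReal_inner_eq (z w : ℂ) : ((⟪z, w⟫_ℝ : ℝ) : ℂ) = (conj z * w + z * conj w) / 2 := by
  rw [Complex.inner, Complex.re_eq_add_conj]
  simp [mul_comm]

theorem fderiv_unimodularMetric_symmetric {p k : ℂ} {h : ℝ}
    (hmse : (1 + ‖p‖ ^ 2) * (2 * h) = ⟪p, symmCLM h k p⟫_ℝ) (x y : ℂ) :
    fderiv ℝ unimodularMetric p (symmCLM h k x) y =
      fderiv ℝ unimodularMetric p (symmCLM h k y) x := by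
  have hmse' : (1 + (‖p‖ : ℂ) ^ 2) * (2 * h) = (⟪p, symmCLM h k p⟫_ℝ : ℝ) := by exact_mod_cast hmse
  rw [fderiv_unimodularMetric_apply, fderiv_unimodularMetric_apply]
  simp only [ofReal_inner_eq, ← Complex.mul_conj', symmCLM_apply, map_add, map_mul,
    Complex.conj_ofReal, Complex.conj_conj] at hmse' ⊢
  linear_combination (areaDensity p : ℂ)⁻¹ ^ 3 * (p * (x * conj y - y * conj x) / 2) * hmse'

variable {p k : ℂ → ℂ} {h : ℂ → ℝ}

theorem exists_hasFDerivAt_unimodularMetric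
    (hp : ∀ z, HasFDerivAt p (symmCLM (h z) (k z)) z)
    (hmse : ∀ z, (1 + ‖p z‖ ^ 2) * (2 * h z) = ⟪p z, symmCLM (h z) (k z) (p z)⟫_ℝ) :
    ∃ G : ℂ → ℂ, ∀ z, HasFDerivAt G (unimodularMetric (p z)) z := by
  have hderiv (z : ℂ) := (differentiable_unimodularMetric (p z)).hasFDerivAt.comp z (hp z)
  obtain ⟨G, hG⟩ := convex_univ.exists_forall_hasFDerivAt_of_fderiv_symmetric isOpen_univ
    (ω := unimodularMetric ∘ p) (fun z _ => (hderiv z).differentiableAt.differentiableWithinAt)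
    fun z _ x y => by
      simpa only [(hderiv z).fderiv, ContinuousLinearMap.comp_apply] using
        fderiv_unimodularMetric_symmetric (hmse z) x y
  exact ⟨G, fun z => hG z trivial⟩

theorem gradient_eq_gradient_of_mse
    (hp : ∀ z, HasFDerivAt p (symmCLM (h z) (k z)) z)
    (hmse : ∀ z, (1 + ‖p z‖ ^ 2) * (2 * h z) = ⟪p z, symmCLM (h z) (k z) (p z)⟫_ℝ)
    (z w : ℂ) : p z = p w := by
  obtain ⟨G, hG⟩ := exists_hasFDerivAt_unimodularMetric hp hmse
  simp only [unimodularMetric_eq_symmCLM] at hG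
  have hcont : Continuous p := continuous_iff_continuousAt.2 fun z => (hp z).continuousAt
  have hW : Continuous fun z => areaDensity (p z) := continuous_areaDensity.comp hcont
  have hW₀ (z : ℂ) : areaDensity (p z) ≠ 0 := (areaDensity_pos (p z)).ne'
  have hsq (z : ℂ) : p z ^ 2 = p w ^ 2 := by
    obtain ⟨ha, hb⟩ := symmCLM_coeff_eq_of_det_eq_one
      (fun z => div_pos (by positivity) (areaDensity_pos (p z)))
      (fun z => unimodularMetric_det (p z)) hG
      (by fun_prop (disch := assumption)) (by fun_prop (disch := simpa using hW₀)) z w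
    exact sq_eq_sq_of_unimodularMetric_coeff_eq ha hb
  rcases eq_or_ne (p w) 0 with h0 | h0
  · simpa [h0] using hsq z
  · exact isPreconnected_univ.eq_of_sq_eq hcont.continuousOn continuousOn_const
      (fun z _ => hsq z) (fun _ => h0) (Set.mem_univ w) rfl (Set.mem_univ z)

end MinimalSurface

section EuclideanSpace

variable {n : ℕ} {u : EuclideanSpace ℝ (Fin n) → ℝ}

theorem fderiv_apply_eq_sum_partialDeriv' (x v : EuclideanSpace ℝ (Fin n)) :
    fderiv ℝ u x v = ∑ i, v i * partialDeriv' u i x := by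
  conv_lhs => rw [← (EuclideanSpace.basisFun (Fin n) ℝ).sum_repr v, map_sum]
  simp [partialDeriv']

theorem eq_sum_add_of_partialDeriv'_eq (hu : Differentiable ℝ u) {b : Fin n → ℝ}
    (hb : ∀ i x, partialDeriv' u i x = b i) (x : EuclideanSpace ℝ (Fin n)) :
    u x = (∑ i, b i * x i) + u 0 := by
  have hfderiv (x : EuclideanSpace ℝ (Fin n)) : fderiv ℝ u x = fderiv ℝ u 0 := by
    ext v
    simp [fderiv_apply_eq_sum_partialDeriv', hb]
  have hlin : u x = fderiv ℝ u 0 x + u 0 := by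
    refine congrFun (eq_of_fderiv_eq (𝕜 := ℝ) (g := fun x => fderiv ℝ u 0 x + u 0) hu (by fun_prop)
      (fun x => ?_) 0 (by simp)) x
    rw [fderiv_add_const, ContinuousLinearMap.fderiv, hfderiv]
  simpa [fderiv_apply_eq_sum_partialDeriv', hb, mul_comm] using hlin

theorem hessianMatrix_isSymm (hu : Differentiable ℝ u) (hu' : Differentiable ℝ (fderiv ℝ u))
    (x : EuclideanSpace ℝ (Fin n)) : (hessianMatrix u x).IsSymm := by
  have heq (i j : Fin n) : hessianMatrix u x i j =
      fderiv ℝ (fderiv ℝ u) x (EuclideanSpace.single i 1) (EuclideanSpace.single j 1) := by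
    simp [hessianMatrix, fderiv_clm_apply (hu' x) (differentiableAt_const _)]
  ext i j
  rw [Matrix.transpose_apply, heq, heq]
  exact second_derivative_symmetric (fun y => (hu y).hasFDerivAt) (hu' x).hasFDerivAt _ _

theorem hasFDerivAt_partialDeriv' (hu : Differentiable ℝ (fderiv ℝ u)) (j : Fin n)
    (x : EuclideanSpace ℝ (Fin n)) : HasFDerivAt (partialDeriv' u j)
      (∑ i, hessianMatrix u x i j • EuclideanSpace.proj (𝕜 := ℝ) i) x := by
  have hdiff : Differentiable ℝ (partialDeriv' u j) := hu.clm_apply (differentiable_const _)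
  refine (hdiff x).hasFDerivAt.congr_fderiv ?_
  ext v
  have hhess (i : Fin n) : partialDeriv' (partialDeriv' u j) i x = hessianMatrix u x i j := rfl
  simp [fderiv_apply_eq_sum_partialDeriv', hhess, mul_comm]

end EuclideanSpace

section Plane

/-- The gradient `u_x + i u_y` of a function on the plane, as a function of `z = x + i y`. -/
noncomputable def complexGradient (u : EuclideanSpace ℝ (Fin 2) → ℝ) (z : ℂ) : ℂ :=
  ⟨partialDeriv' u 0 (Complex.orthonormalBasisOneI.repr z),
    partialDeriv' u 1 (Complex.orthonormalBasisOneI.repr z)⟩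

theorem symmCLM_half_trace_apply (r s t : ℝ) (v : ℂ) :
    symmCLM ((r + t) / 2) ⟨(r - t) / 2, s⟩ v = ⟨r * v.re + s * v.im, s * v.re + t * v.im⟩ := by
  rw [symmCLM_apply]
  apply Complex.ext
  · simp only [Complex.add_re, Complex.mul_re, Complex.ofReal_re, Complex.ofReal_im,
      Complex.conj_re, Complex.conj_im]
    ring
  · simp only [Complex.add_im, Complex.mul_im, Complex.ofReal_re, Complex.ofReal_im,
      Complex.conj_re, Complex.conj_im]
    ring

variable {u : EuclideanSpace ℝ (Fin 2) → ℝ}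

theorem hasFDerivAt_complexGradient (hu : Differentiable ℝ u)
    (hu' : Differentiable ℝ (fderiv ℝ u)) (z : ℂ) :
    let A := hessianMatrix u (Complex.orthonormalBasisOneI.repr z)
    HasFDerivAt (complexGradient u)
      (symmCLM ((A 0 0 + A 1 1) / 2) ⟨(A 0 0 - A 1 1) / 2, A 0 1⟩) z := by
  intro A
  have hsymm : A 1 0 = A 0 1 := (hessianMatrix_isSymm hu hu' _).apply 0 1
  have hpartial (i : Fin 2) := (hasFDerivAt_partialDeriv' hu' i _).comp z
    Complex.orthonormalBasisOneI.repr.toContinuousLinearEquiv.hasFDerivAt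
  have hpair := Complex.equivRealProdCLM.symm.hasFDerivAt.comp z
    ((hpartial 0).prodMk (hpartial 1))
  refine hpair.congr_fderiv (ContinuousLinearMap.ext fun v => ?_)
  rw [symmCLM_half_trace_apply, ← hsymm]
  apply Complex.ext <;> simp [A, Fin.sum_univ_two, hsymm]

theorem mse_complexGradient (hu : Differentiable ℝ u) (hu' : Differentiable ℝ (fderiv ℝ u))
    (hMSE : ∀ x, (1 + ∑ i, (partialDeriv' u i x) ^ 2) * (∑ i, hessianMatrix u x i i)
      - ∑ i, ∑ j, partialDeriv' u i x * partialDeriv' u j x * hessianMatrix u x i j = 0) (z : ℂ) :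
    let A := hessianMatrix u (Complex.orthonormalBasisOneI.repr z)
    (1 + ‖complexGradient u z‖ ^ 2) * (2 * ((A 0 0 + A 1 1) / 2)) =
      ⟪complexGradient u z,
        symmCLM ((A 0 0 + A 1 1) / 2) ⟨(A 0 0 - A 1 1) / 2, A 0 1⟩ (complexGradient u z)⟫_ℝ := by
  intro A
  have hsymm : A 1 0 = A 0 1 := (hessianMatrix_isSymm hu hu' _).apply 0 1
  have hmse := hMSE (Complex.orthonormalBasisOneI.repr z)
  simp only [Fin.sum_univ_two] at hmse
  rw [symmCLM_half_trace_apply, Complex.inner, Complex.sq_norm, Complex.normSq_apply]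
  simp only [complexGradient, Complex.mul_re, Complex.conj_re, Complex.conj_im]
  linear_combination hmse + partialDeriv' u 0 (Complex.orthonormalBasisOneI.repr z) *
    partialDeriv' u 1 (Complex.orthonormalBasisOneI.repr z) * hsymm

end Plane

theorem bernstein_mse_general (u : EuclideanSpace ℝ (Fin 2) → ℝ) (hu : Differentiable ℝ u)
    (hu' : Differentiable ℝ (fderiv ℝ u))
    (hMSE : ∀ x, (1 + ∑ i, (partialDeriv' u i x) ^ 2) * (∑ i, hessianMatrix u x i i)
      - ∑ i, ∑ j, partialDeriv' u i x * partialDeriv' u j x * hessianMatrix u x i j = 0) :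
    ∃ (b : Fin 2 → ℝ) (c : ℝ), ∀ x, u x = (∑ i, b i * x i) + c := by
  have hgrad (z : ℂ) : complexGradient u z = complexGradient u 0 :=
    gradient_eq_gradient_of_mse (hasFDerivAt_complexGradient hu hu')
      (mse_complexGradient hu hu' hMSE) z 0
  refine ⟨fun i => partialDeriv' u i 0, u 0, eq_sum_add_of_partialDeriv'_eq hu fun i x => ?_⟩
  have hx := hgrad (Complex.orthonormalBasisOneI.repr.symm x)
  rw [complexGradient, complexGradient, map_zero, LinearIsometryEquiv.apply_symm_apply,
    Complex.mk.injEq] at hx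
  fin_cases i
  exacts [hx.1, hx.2]

/-- Bernstein's theorem: entire solutions of the minimal surface equation
`(1+|∇u|²)Δu − ∑ᵢⱼ uᵢ uⱼ uᵢⱼ = 0` on ℝ² are affine. -/
theorem bernstein_mse (u : EuclideanSpace ℝ (Fin 2) → ℝ)
    (hu : ContDiff ℝ (⊤ : ℕ∞) u)
    (hMSE : ∀ x, (1 + ∑ i, (partialDeriv' u i x) ^ 2) * (∑ i, hessianMatrix u x i i)
      - ∑ i, ∑ j, partialDeriv' u i x * partialDeriv' u j x * hessianMatrix u x i j = 0) :
    ∃ (b : Fin 2 → ℝ) (c : ℝ), ∀ x, u x = (∑ i, b i * x i) + c :=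
  bernstein_mse_general u (hu.differentiable (by simp))
    ((hu.fderiv_right (m := 1) (by norm_cast)).differentiable one_ne_zero) hMSE
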